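/- arXiv:2305.00153 — 4 statements merged into one kernel-verified Lean document; each statement's English description precedes it below -/
import Mathlib

section
/- Let n > 2. Then Λ̃ = {z ∈ ℂ^{n+1} \ {0} : ⟨z,z⟩ ≥ 0 and f(z) ≤ 0}; in particular Λ̃ is (the cone over) a real semi-algebraic set, described by one polynomial inequality of degree 2 and one of degree 4 in the real and imaginary parts of the coordinates. Moreover Λ̃ has nonempty interior in ℂ^{n+1}. -/
open scoped ComplexConjugate

noncomputable def herm (n : ℕ) (z w : Fin (n + 1) → ℂ) : ℂ :=
  (∑ j : Fin n, z j.castSucc * conj (w j.castSucc)) - z (Fin.last n) * conj (w (Fin.last n))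

def conjVec (n : ℕ) (z : Fin (n + 1) → ℂ) : Fin (n + 1) → ℂ := fun j => conj (z j)

noncomputable def fdet (n : ℕ) (z : Fin (n + 1) → ℂ) : ℝ :=
  Complex.normSq (herm n z (conjVec n z)) - ((herm n z z).re) ^ 2

def IsRealVec (n : ℕ) (z : Fin (n + 1) → ℂ) : Prop := conjVec n z = z

def Scone (n : ℕ) : Set (Fin (n + 1) → ℂ) :=
  {w | w ≠ 0 ∧ IsRealVec n w ∧ herm n w w = 0}

def LambdaCone (n : ℕ) : Set (Fin (n + 1) → ℂ) :=
  {z | z ≠ 0 ∧ ∃ w ∈ Scone n, herm n z w = 0}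

/-!
Write `z = x + iy` with `x, y` real. For a real null vector `w`, the equation `⟨z, w⟩ = 0` says that
`w` is Lorentz orthogonal to the real span of `x` and `y`. By the Cauchy–Schwarz inequality such
a `w ≠ 0` exists only if the span contains no timelike vector. Conversely, a subspace of
`E × ℝ` without timelike vectors is the graph of a functional of norm at most one on its projection
to `E`. If the projection is not all of `E`, adding a vector orthogonal to it turns the Riesz vector
of that functional into a unit vector `u`, and `w = (u, 1)` works. Finally, the Lorentz form is
nonnegative on the span of `x` and `y` if and only if their Gram matrix has nonnegative trace and
determinant; the trace is `⟨z, z⟩` and the determinant is `-f(z) / 4`.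
-/

open LinearMap (BilinForm)

section BinaryQuadraticForm

variable {R V : Type*} [CommRing R] [LinearOrder R] [IsStrictOrderedRing R]

lemma binary_quadratic_nonneg {a b c : R} (htrace : 0 ≤ a + c) (hdet : b ^ 2 ≤ a * c) (s t : R) :
    0 ≤ s ^ 2 * a + 2 * s * t * b + t ^ 2 * c := by
  rcases htrace.eq_or_lt with hzero | hpos
  · obtain rfl : c = -a := by linear_combination -hzero
    obtain rfl : a = 0 := by
      have : a ^ 2 ≤ 0 := by linarith [sq_nonneg b]
      exact sq_nonpos_iff a |>.1 this
    obtain rfl : b = 0 := sq_nonpos_iff b |>.1 (by simpa using hdet)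
    simp
  · -- Cayley–Hamilton for `M = !![a, b; b, c]`: `tr M * ⟪M v, v⟫ = ‖M v‖ ^ 2 + det M * ‖v‖ ^ 2`.
    have trace_mul_form : (a + c) * (s ^ 2 * a + 2 * s * t * b + t ^ 2 * c) =
        (s * a + t * b) ^ 2 + (s * b + t * c) ^ 2 + (a * c - b ^ 2) * (s ^ 2 + t ^ 2) := by
      ring
    refine nonneg_of_mul_nonneg_right (trace_mul_form ▸ ?_) hpos
    have := sub_nonneg.2 hdet
    positivity

variable [AddCommGroup V] [Module R V]

lemma forall_mem_span_pair_nonneg_iff {B : BilinForm R V} (hB : B.IsSymm) (x y : V) :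
    (∀ v ∈ Submodule.span R {x, y}, 0 ≤ B v v) ↔
      0 ≤ B x x + B y y ∧ B x y ^ 2 ≤ B x x * B y y := by
  constructor
  · intro h
    have hx : x ∈ Submodule.span R {x, y} := Submodule.subset_span (by simp)
    have hy : y ∈ Submodule.span R {x, y} := Submodule.subset_span (by simp)
    exact ⟨add_nonneg (h x hx) (h y hy), BilinForm.apply_sq_le_of_symm (B.restrict _)
      (fun v ↦ h v v.2) (BilinForm.isSymm_iff.1 (hB.restrict _)) ⟨x, hx⟩ ⟨y, hy⟩⟩
  · rintro ⟨htrace, hdet⟩ v hv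
    obtain ⟨s, t, rfl⟩ := Submodule.mem_span_pair.1 hv
    have expand : B (s • x + t • y) (s • x + t • y) =
        s ^ 2 * B x x + 2 * s * t * B x y + t ^ 2 * B y y := by
      simp only [map_add, map_smul, LinearMap.add_apply, LinearMap.smul_apply, smul_eq_mul,
        hB.eq y x]
      ring
    exact expand ▸ binary_quadratic_nonneg htrace hdet s t

end BinaryQuadraticForm

section Minkowski

variable {E : Type*} [NormedAddCommGroup E] [InnerProductSpace ℝ E]

variable (E) in
/-- The Lorentz form `⟪x, y⟫ - s * t` on the Minkowski space `E × ℝ`, whose second factor is the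
time coordinate; timelike vectors are those on which the form is negative. -/
noncomputable def minkowskiForm : BilinForm ℝ (E × ℝ) :=
  (innerₗ E).compl₁₂ (LinearMap.fst ℝ E ℝ) (LinearMap.fst ℝ E ℝ) -
    (LinearMap.mul ℝ ℝ).compl₁₂ (LinearMap.snd ℝ E ℝ) (LinearMap.snd ℝ E ℝ)

lemma minkowskiForm_apply (v w : E × ℝ) :
    minkowskiForm E v w = inner ℝ v.1 w.1 - v.2 * w.2 := rfl

lemma minkowskiForm_self (v : E × ℝ) : minkowskiForm E v v = ‖v.1‖ ^ 2 - v.2 ^ 2 := by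
  rw [minkowskiForm_apply, real_inner_self_eq_norm_sq, sq v.2]

lemma minkowskiForm_isSymm : (minkowskiForm E).IsSymm :=
  ⟨fun v w ↦ by rw [minkowskiForm_apply, minkowskiForm_apply, real_inner_comm, mul_comm]⟩

lemma minkowskiForm_self_nonneg_of_orthogonal_null {v w : E × ℝ} (hw₀ : w ≠ 0)
    (hw : minkowskiForm E w w = 0) (hvw : minkowskiForm E v w = 0) :
    0 ≤ minkowskiForm E v v := by
  rw [minkowskiForm_self, sub_eq_zero] at hw
  rw [minkowskiForm_apply, sub_eq_zero] at hvw
  have htime : w.2 ≠ 0 := fun h ↦ hw₀ (Prod.ext (by simpa [h] using hw) h)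
  have hcs : v.2 ^ 2 * w.2 ^ 2 ≤ ‖v.1‖ ^ 2 * w.2 ^ 2 := by
    calc v.2 ^ 2 * w.2 ^ 2 = |inner ℝ v.1 w.1| ^ 2 := by rw [hvw, sq_abs, mul_pow]
      _ ≤ (‖v.1‖ * ‖w.1‖) ^ 2 := by gcongr; exact abs_real_inner_le_norm _ _
      _ = ‖v.1‖ ^ 2 * w.2 ^ 2 := by rw [mul_pow, hw]
  rw [minkowskiForm_self, sub_nonneg]
  exact le_of_mul_le_mul_right hcs (by positivity)

lemma exists_mem_map_fst_inner_eq_snd {P : Submodule ℝ (E × ℝ)}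
    [CompleteSpace (P.map (LinearMap.fst ℝ E ℝ))] (hP : ∀ v ∈ P, 0 ≤ minkowskiForm E v v) :
    ∃ a ∈ P.map (LinearMap.fst ℝ E ℝ), ‖a‖ ≤ 1 ∧ ∀ v ∈ P, inner ℝ v.1 a = v.2 := by
  have hle : ∀ v ∈ P, |v.2| ≤ ‖v.1‖ := fun v hv ↦
    abs_le_of_sq_le_sq (sub_nonneg.1 (minkowskiForm_self v ▸ hP v hv)) (norm_nonneg _)
  have hgraph : ∀ v ∈ P, v.1 = 0 → v.2 = 0 := fun v hv h ↦ by simpa [h] using hle v hv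
  let φ : StrongDual ℝ (P.map (LinearMap.fst ℝ E ℝ)) :=
    P.toLinearPMap.toFun.mkContinuous 1 fun x ↦ by
      simpa using hle _ (Submodule.mem_graph_toLinearPMap hgraph x)
  let a := (InnerProductSpace.toDual ℝ (P.map (LinearMap.fst ℝ E ℝ))).symm φ
  have ha : ‖a‖ ≤ 1 :=
    (LinearIsometryEquiv.norm_map _ φ).trans_le (LinearMap.mkContinuous_norm_le _ zero_le_one _)
  refine ⟨a, a.2, ha, fun v hv ↦ ?_⟩
  obtain ⟨x, hx, hφx⟩ : ∃ x : P.map (LinearMap.fst ℝ E ℝ), (x : E) = v.1 ∧ φ x = v.2 :=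
    (LinearPMap.mem_graph_iff _).1 ((Submodule.toLinearPMap_graph_eq P hgraph).symm ▸ hv)
  rw [← hx, ← hφx, real_inner_comm]
  exact InnerProductSpace.toDual_symm_apply (x := x)

theorem exists_null_orthogonal_iff_forall_nonneg {P : Submodule ℝ (E × ℝ)}
    [CompleteSpace (P.map (LinearMap.fst ℝ E ℝ))] (hP : P.map (LinearMap.fst ℝ E ℝ) ≠ ⊤) :
    (∃ w ≠ 0, minkowskiForm E w w = 0 ∧ w ∈ (minkowskiForm E).orthogonal P) ↔
      ∀ v ∈ P, 0 ≤ minkowskiForm E v v := by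
  refine ⟨fun ⟨w, hw₀, hw, hPw⟩ v hv ↦
    minkowskiForm_self_nonneg_of_orthogonal_null hw₀ hw (hPw v hv), fun h ↦ ?_⟩
  obtain ⟨a, haP, ha, hPa⟩ := exists_mem_map_fst_inner_eq_snd h
  have : Nontrivial (P.map (LinearMap.fst ℝ E ℝ))ᗮ :=
    Submodule.nontrivial_iff_ne_bot.2 (Submodule.orthogonal_eq_bot_iff.not.2 hP)
  obtain ⟨⟨e, heP⟩, he⟩ :=
    exists_norm_eq (P.map (LinearMap.fst ℝ E ℝ))ᗮ (Real.sqrt_nonneg (1 - ‖a‖ ^ 2))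
  have hunit : ‖a + e‖ ^ 2 = 1 := by
    rw [Submodule.coe_norm] at he
    rw [norm_add_sq_real, heP a haP, he, Real.sq_sqrt (by nlinarith [norm_nonneg a])]
    ring
  refine ⟨(a + e, 1), by simp, by simp [minkowskiForm_self, hunit], fun v hv ↦ ?_⟩
  have hve : inner ℝ v.1 e = 0 := heP _ (Submodule.mem_map_of_mem hv)
  change minkowskiForm E v (a + e, 1) = 0
  simp [minkowskiForm_apply, inner_add_right, hPa v hv, hve]

lemma map_fst_span_pair_ne_top (hE : 2 < Module.rank ℝ E) (x y : E × ℝ) :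
    (Submodule.span ℝ {x, y}).map (LinearMap.fst ℝ E ℝ) ≠ ⊤ := by
  intro htop
  refine hE.not_ge ?_
  calc Module.rank ℝ E = Module.rank ℝ (Submodule.span ℝ {x.1, y.1}) := by
        rw [← rank_top ℝ E, ← htop, Submodule.map_span, Set.image_pair]; rfl
    _ ≤ Cardinal.mk ({x.1, y.1} : Set E) := rank_span_le _
    _ ≤ 2 := by
        refine Cardinal.mk_insert_le.trans ?_
        rw [Cardinal.mk_singleton, one_add_one_eq_two]

theorem exists_null_orthogonal_pair_iff (hE : 2 < Module.rank ℝ E) (x y : E × ℝ) :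
    (∃ w ≠ 0, minkowskiForm E w w = 0 ∧ minkowskiForm E x w = 0 ∧ minkowskiForm E y w = 0) ↔
      0 ≤ minkowskiForm E x x + minkowskiForm E y y ∧
        minkowskiForm E x y ^ 2 ≤ minkowskiForm E x x * minkowskiForm E y y := by
  have : FiniteDimensional ℝ (Submodule.span ℝ {x, y}) := .span_of_finite ℝ (by simp)
  have : CompleteSpace ((Submodule.span ℝ {x, y}).map (LinearMap.fst ℝ E ℝ)) :=
    FiniteDimensional.complete ℝ _
  have horth (w : E × ℝ) : w ∈ (minkowskiForm E).orthogonal (Submodule.span ℝ {x, y}) ↔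
      minkowskiForm E x w = 0 ∧ minkowskiForm E y w = 0 :=
    (Submodule.span_le (p := LinearMap.ker ((minkowskiForm E).flip w))).trans
      (by simp [Set.pair_subset_iff])
  rw [← forall_mem_span_pair_nonneg_iff minkowskiForm_isSymm,
    ← exists_null_orthogonal_iff_forall_nonneg (map_fst_span_pair_ne_top hE x y)]
  simp only [horth]

end Minkowski

section Coordinates

variable {n : ℕ}

/-- The real part of `z ∈ ℂ^{n+1}` as a vector of Minkowski space, the last coordinate being
time. -/
noncomputable def reVec (z : Fin (n + 1) → ℂ) : EuclideanSpace ℝ (Fin n) × ℝ :=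
  (WithLp.toLp 2 fun j ↦ (z j.castSucc).re, (z (Fin.last n)).re)

/-- The imaginary part of `z ∈ ℂ^{n+1}` as a vector of Minkowski space, the last coordinate being
time. -/
noncomputable def imVec (z : Fin (n + 1) → ℂ) : EuclideanSpace ℝ (Fin n) × ℝ :=
  (WithLp.toLp 2 fun j ↦ (z j.castSucc).im, (z (Fin.last n)).im)

lemma exists_reVec_eq_imVec_eq (x y : EuclideanSpace ℝ (Fin n) × ℝ) :
    ∃ z : Fin (n + 1) → ℂ, reVec z = x ∧ imVec z = y :=
  ⟨Fin.snoc (α := fun _ ↦ ℂ) (fun j ↦ ⟨x.1 j, y.1 j⟩) ⟨x.2, y.2⟩,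
    by simp [reVec], by simp [imVec]⟩

lemma reVec_eq_zero_iff {z : Fin (n + 1) → ℂ} : reVec z = 0 ↔ ∀ j, (z j).re = 0 := by
  simp [reVec, Prod.ext_iff, funext_iff, Fin.forall_fin_succ', and_comm]

lemma imVec_eq_zero_iff {z : Fin (n + 1) → ℂ} : imVec z = 0 ↔ ∀ j, (z j).im = 0 := by
  simp [imVec, Prod.ext_iff, funext_iff, Fin.forall_fin_succ', and_comm]

lemma isRealVec_iff_imVec_eq_zero {z : Fin (n + 1) → ℂ} : IsRealVec n z ↔ imVec z = 0 := by
  simp [IsRealVec, conjVec, funext_iff, imVec_eq_zero_iff, Complex.conj_eq_iff_im]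

lemma reVec_ne_zero_iff_of_imVec_eq_zero {z : Fin (n + 1) → ℂ} (hz : imVec z = 0) :
    reVec z ≠ 0 ↔ z ≠ 0 := by
  rw [imVec_eq_zero_iff] at hz
  simp [reVec_eq_zero_iff, funext_iff, Complex.ext_iff, hz]

lemma reVec_conjVec (z : Fin (n + 1) → ℂ) : reVec (conjVec n z) = reVec z := by
  simp [reVec, conjVec]

lemma imVec_conjVec (z : Fin (n + 1) → ℂ) : imVec (conjVec n z) = -imVec z := by
  ext <;> simp [imVec, conjVec]

lemma herm_eq_minkowskiForm (z w : Fin (n + 1) → ℂ) :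
    herm n z w = ⟨minkowskiForm _ (reVec z) (reVec w) + minkowskiForm _ (imVec z) (imVec w),
      minkowskiForm _ (imVec z) (reVec w) - minkowskiForm _ (reVec z) (imVec w)⟩ := by
  apply Complex.ext
  · simp only [herm, minkowskiForm_apply, reVec, imVec, PiLp.inner_apply, RCLike.inner_apply,
      Real.ringHom_apply, Complex.sub_re, Complex.re_sum, Complex.mul_re, Complex.conj_re,
      Complex.conj_im, mul_neg, sub_neg_eq_add, Finset.sum_add_distrib, mul_comm]
    ring
  · simp only [herm, minkowskiForm_apply, reVec, imVec, PiLp.inner_apply, RCLike.inner_apply,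
      Real.ringHom_apply, Complex.sub_im, Complex.im_sum, Complex.mul_im, Complex.conj_re,
      Complex.conj_im, mul_neg, Finset.sum_add_distrib, Finset.sum_neg_distrib, mul_comm]
    ring

lemma herm_self_re_eq_minkowskiForm (z : Fin (n + 1) → ℂ) :
    (herm n z z).re =
      minkowskiForm _ (reVec z) (reVec z) + minkowskiForm _ (imVec z) (imVec z) := by
  rw [herm_eq_minkowskiForm]

lemma fdet_eq_minkowskiForm (z : Fin (n + 1) → ℂ) :
    fdet n z = 4 * (minkowskiForm _ (reVec z) (imVec z) ^ 2 -
      minkowskiForm _ (reVec z) (reVec z) * minkowskiForm _ (imVec z) (imVec z)) := by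
  rw [fdet, herm_self_re_eq_minkowskiForm, herm_eq_minkowskiForm, Complex.normSq_mk,
    reVec_conjVec, imVec_conjVec, map_neg, map_neg, minkowskiForm_isSymm.eq (imVec z) (reVec z)]
  ring

lemma exists_mem_scone_herm_eq_zero_iff (z : Fin (n + 1) → ℂ) :
    (∃ w ∈ Scone n, herm n z w = 0) ↔
      ∃ w ≠ 0, minkowskiForm _ w w = 0 ∧
        minkowskiForm _ (reVec z) w = 0 ∧ minkowskiForm _ (imVec z) w = 0 := by
  constructor
  · rintro ⟨w, ⟨hw₀, hreal, hnull⟩, hzw⟩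
    rw [isRealVec_iff_imVec_eq_zero] at hreal
    simp only [herm_eq_minkowskiForm, hreal, Complex.ext_iff, map_zero] at hnull hzw
    exact ⟨reVec w, (reVec_ne_zero_iff_of_imVec_eq_zero hreal).2 hw₀, by simpa using hnull,
      by simpa using hzw⟩
  · rintro ⟨a, ha₀, hnull, hza⟩
    obtain ⟨w, rfl, hreal⟩ := exists_reVec_eq_imVec_eq a 0
    refine ⟨w, ⟨(reVec_ne_zero_iff_of_imVec_eq_zero hreal).1 ha₀,
      isRealVec_iff_imVec_eq_zero.2 hreal, ?_⟩, ?_⟩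
    · simp [herm_eq_minkowskiForm, hreal, hnull, Complex.ext_iff]
    · simp [herm_eq_minkowskiForm, hreal, hza, Complex.ext_iff]

lemma lambdaCone_eq_setOf (hn : 2 < n) :
    LambdaCone n = {z | z ≠ 0 ∧ 0 ≤ (herm n z z).re ∧ fdet n z ≤ 0} := by
  ext z
  refine and_congr_right fun _ ↦ ?_
  have hrank : 2 < Module.rank ℝ (EuclideanSpace ℝ (Fin n)) := by
    exact_mod_cast Module.lt_rank_of_lt_finrank (R := ℝ) (M := EuclideanSpace ℝ (Fin n))
      (by simpa using hn)
  rw [exists_mem_scone_herm_eq_zero_iff, exists_null_orthogonal_pair_iff hrank,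
    herm_self_re_eq_minkowskiForm, fdet_eq_minkowskiForm, ← smul_eq_mul (4 : ℝ),
    smul_nonpos_iff_nonpos_of_pos_left four_pos, sub_nonpos]

lemma isOpen_setOf_herm_pos_fdet_neg (n : ℕ) :
    IsOpen {z : Fin (n + 1) → ℂ | 0 < (herm n z z).re ∧ fdet n z < 0} := by
  have hherm : Continuous fun z ↦ herm n z z := by unfold herm; fun_prop
  have hfdet : Continuous (fdet n) := by
    have := Complex.continuous_normSq
    unfold fdet herm conjVec
    fun_prop
  exact (isOpen_lt continuous_const (Complex.continuous_re.comp hherm)).inter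
    (isOpen_lt hfdet continuous_const)

lemma exists_herm_pos_fdet_neg (hn : 2 ≤ n) :
    ∃ z : Fin (n + 1) → ℂ, 0 < (herm n z z).re ∧ fdet n z < 0 := by
  have : Nontrivial (Fin n) := Fin.nontrivial_iff_two_le.2 hn
  obtain ⟨i, j, hij⟩ := exists_pair_ne (Fin n)
  obtain ⟨z, hre, him⟩ := exists_reVec_eq_imVec_eq
    (EuclideanSpace.single i 1, 0) (EuclideanSpace.single j 1, 0)
  refine ⟨z, ?_, ?_⟩
  · simp [herm_self_re_eq_minkowskiForm, hre, him, minkowskiForm_self]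
  · simp [fdet_eq_minkowskiForm, hre, him, minkowskiForm_self, minkowskiForm_apply,
      EuclideanSpace.inner_single_left, hij]

end Coordinates

/-- (Theorem 2 / `teo:dos`, cone version): For `n > 2`, the cone over the Kulkarni limit
set is the real semi-algebraic set `{z ≠ 0 : ⟨z,z⟩ ≥ 0 and f(z) ≤ 0}`, and it has
nonempty interior in `ℂ^{n+1}`. -/
theorem lambdaCone_semialgebraic (n : ℕ) (hn : 2 < n) :
    LambdaCone n =
      {z : Fin (n + 1) → ℂ | z ≠ 0 ∧ 0 ≤ (herm n z z).re ∧ fdet n z ≤ 0} ∧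
    (interior (LambdaCone n)).Nonempty := by
  refine ⟨lambdaCone_eq_setOf hn, ?_⟩
  have hsub : {z : Fin (n + 1) → ℂ | 0 < (herm n z z).re ∧ fdet n z < 0} ⊆ LambdaCone n := by
    rw [lambdaCone_eq_setOf hn]
    rintro z ⟨hherm, hfdet⟩
    exact ⟨by rintro rfl; simp [herm] at hherm, hherm.le, hfdet.le⟩
  obtain ⟨z, hz⟩ := exists_herm_pos_fdet_neg hn.le
  exact ⟨z, interior_maximal hsub (isOpen_setOf_herm_pos_fdet_neg n) hz⟩
end

section
/- Let z ∈ ℂ^{n+1} with f(z) > 0 and let η ∈ ℂ satisfy η² = −⟨z,z̄⟩. Set w = conj(η)·z + η·z̄. Then η ≠ 0, w is a real vector (w = w̄), and ⟨w,w⟩ = 2|η|²·(⟨z,z⟩ − |η|²) < 0; in particular w is a nonzero negative vector. -/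
open scoped ComplexConjugate

/-!
For a sesquilinear form `B` that is real with respect to a conjugation `σ`, expanding `B w w` at
`w = conj η • z + η • σ z` gives `2 |η|² Re B(z,z)` plus the cross terms
`2 Re ((conj η)² B(z, σ z))`. The condition `η² = -B(z, σ z)` turns the cross terms into `-2 |η|⁴`,
and it turns `f(z) > 0` into `|Re B(z,z)| < |η|²`, which makes the total negative.
-/

section MidpointVector

variable {R V : Type*} [CommSemiring R] [StarRing R] [AddCommMonoid V] [Module R V]

/-- The midpoint vector of `z` for the parameter `η`. The conjugate-linear map `σ` plays the role
of complex conjugation `z ↦ z̄`, so that fixed points of `σ` are the real vectors. -/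
def midpointVector (σ : V →ₗ⋆[R] V) (η : R) (z : V) : V :=
  conj η • z + η • σ z

theorem map_midpointVector {σ : V →ₗ⋆[R] V} (hσ : Function.Involutive σ) (η : R) (z : V) :
    σ (midpointVector σ η z) = midpointVector σ η z := by
  simp only [midpointVector, map_add, map_smulₛₗ, hσ z, starRingEnd_self_apply]
  exact add_comm _ _

theorem form_midpointVector_self {B : V →ₗ[R] V →ₗ⋆[R] R} {σ : V →ₗ⋆[R] V}
    (hσ : Function.Involutive σ) (hB : ∀ x y, B (σ x) (σ y) = conj (B x y)) (η : R) (z : V) :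
    B (midpointVector σ η z) (midpointVector σ η z) =
      η * conj η * (B z z + conj (B z z)) +
        (conj η ^ 2 * B z (σ z) + conj (conj η ^ 2 * B z (σ z))) := by
  have hBσ : B (σ z) z = conj (B z (σ z)) := by rw [← hB, hσ]
  simp only [midpointVector, map_add, map_smulₛₗ, LinearMap.add_apply, LinearMap.smul_apply,
    smul_eq_mul, RingHom.id_apply, map_mul, map_pow, starRingEnd_self_apply, hB, hBσ]
  ring

end MidpointVector

section ComplexForm

theorem abs_lt_normSq_of_sq_eq_neg {η a : ℂ} {r : ℝ} (hη : η ^ 2 = -a)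
    (hr : r ^ 2 < Complex.normSq a) : |r| < Complex.normSq η := by
  have h_normSq : Complex.normSq a = Complex.normSq η ^ 2 := by
    rw [← map_pow, hη, Complex.normSq_neg]
  exact abs_lt_of_sq_lt_sq (h_normSq ▸ hr) (Complex.normSq_nonneg η)

variable {V : Type*} [AddCommGroup V] [Module ℂ V]
  {B : V →ₗ[ℂ] V →ₗ⋆[ℂ] ℂ} {σ : V →ₗ⋆[ℂ] V}

theorem form_midpointVector_self_of_sq_eq_neg (hσ : Function.Involutive σ)
    (hB : ∀ x y, B (σ x) (σ y) = conj (B x y)) {η : ℂ} {z : V} (hη : η ^ 2 = -B z (σ z)) :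
    B (midpointVector σ η z) (midpointVector σ η z) =
      ((2 * Complex.normSq η * ((B z z).re - Complex.normSq η) : ℝ) : ℂ) := by
  have h_cross : conj η ^ 2 * B z (σ z) = -((Complex.normSq η ^ 2 : ℝ) : ℂ) := by
    rw [← neg_eq_iff_eq_neg.mpr hη, Complex.ofReal_pow, Complex.normSq_eq_conj_mul_self]
    ring
  rw [form_midpointVector_self hσ hB, h_cross, Complex.mul_conj, Complex.add_conj, map_neg,
    Complex.conj_ofReal]
  push_cast
  ring

theorem midpoint_vector_negative_general (hσ : Function.Involutive σ)
    (hB : ∀ x y, B (σ x) (σ y) = conj (B x y)) {z : V}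
    (hf : 0 < Complex.normSq (B z (σ z)) - (B z z).re ^ 2) {η : ℂ} (hη : η ^ 2 = -B z (σ z)) :
    η ≠ 0 ∧
    σ (midpointVector σ η z) = midpointVector σ η z ∧
    (B (midpointVector σ η z) (midpointVector σ η z)).re =
      2 * Complex.normSq η * ((B z z).re - Complex.normSq η) ∧
    (B (midpointVector σ η z) (midpointVector σ η z)).re < 0 ∧
    midpointVector σ η z ≠ 0 := by
  have h_lt : |(B z z).re| < Complex.normSq η := abs_lt_normSq_of_sq_eq_neg hη (sub_pos.mp hf)
  have h_pos : 0 < Complex.normSq η := (abs_nonneg _).trans_lt h_lt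
  have h_re : (B (midpointVector σ η z) (midpointVector σ η z)).re =
      2 * Complex.normSq η * ((B z z).re - Complex.normSq η) := by
    rw [form_midpointVector_self_of_sq_eq_neg hσ hB hη, Complex.ofReal_re]
  have h_neg : (B (midpointVector σ η z) (midpointVector σ η z)).re < 0 :=
    h_re ▸ mul_neg_of_pos_of_neg (by positivity) (sub_neg.mpr (lt_of_abs_lt h_lt))
  refine ⟨Complex.normSq_pos.mp h_pos, map_midpointVector hσ η z, h_re, h_neg, fun h_zero => ?_⟩
  simp [h_zero] at h_neg

end ComplexForm

section StandardForm

variable (n : ℕ)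

/-- The form `herm n` bundled as a sesquilinear map, conjugate-linear in the second argument. -/
noncomputable def hermForm :
    (Fin (n + 1) → ℂ) →ₗ[ℂ] (Fin (n + 1) → ℂ) →ₗ⋆[ℂ] ℂ :=
  LinearMap.mk₂'ₛₗ (RingHom.id ℂ) (starRingEnd ℂ) (herm n)
    (fun x y z => by
      simp only [herm, Pi.add_apply, add_mul, Finset.sum_add_distrib]
      ring)
    (fun c x y => by
      simp only [herm, Pi.smul_apply, smul_eq_mul, RingHom.id_apply, mul_sub, Finset.mul_sum,
        mul_assoc])
    (fun x y z => by
      simp only [herm, Pi.add_apply, map_add, mul_add, Finset.sum_add_distrib]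
      ring)
    (fun c x y => by
      simp only [herm, Pi.smul_apply, smul_eq_mul, map_mul, mul_sub, Finset.mul_sum,
        mul_left_comm])

/-- Coordinatewise conjugation `conjVec n` bundled as a conjugate-linear map. -/
def conjVecLinearMap : (Fin (n + 1) → ℂ) →ₗ⋆[ℂ] (Fin (n + 1) → ℂ) where
  toFun := conjVec n
  map_add' x y := funext fun j => map_add conj (x j) (y j)
  map_smul' c x := funext fun j => map_mul conj c (x j)

theorem conjVec_involutive : Function.Involutive (conjVec n) :=
  fun z => funext fun j => Complex.conj_conj (z j)

theorem herm_conjVec_conjVec (x y : Fin (n + 1) → ℂ) :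
    herm n (conjVec n x) (conjVec n y) = conj (herm n x y) := by
  simp only [herm, conjVec, map_sub, map_sum, map_mul]

end StandardForm

/-- (Lemma 3.12): For `z` with `f(z) > 0` and `η` with `η² = −⟨z,z̄⟩`, the vector
`w = conj(η)·z + η·z̄` satisfies: `η ≠ 0`, `w` is real, and
`⟨w,w⟩ = 2|η|²(⟨z,z⟩ − |η|²) < 0`; in particular `w` is a nonzero negative vector. -/
theorem midpoint_vector_negative (n : ℕ) (hn : 1 ≤ n) (z : Fin (n + 1) → ℂ)
    (hf : 0 < fdet n z) (η : ℂ) (hη : η ^ 2 = -herm n z (conjVec n z)) :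
    η ≠ 0 ∧
    IsRealVec n (conj η • z + η • conjVec n z) ∧
    (herm n (conj η • z + η • conjVec n z) (conj η • z + η • conjVec n z)).re =
      2 * Complex.normSq η * ((herm n z z).re - Complex.normSq η) ∧
    (herm n (conj η • z + η • conjVec n z) (conj η • z + η • conjVec n z)).re < 0 ∧
    conj η • z + η • conjVec n z ≠ 0 := by
  exact midpoint_vector_negative_general (B := hermForm n) (σ := conjVecLinearMap n)
    (conjVec_involutive n) (herm_conjVec_conjVec n) hf hη
end

section
/- Let z = (z₁,…,z_{n+1}) ∈ ℂ^{n+1} with f(z) > 0, let η ∈ ℂ satisfy η² = −⟨z,z̄⟩, and suppose conj(η)·z + η·z̄ = λ·e_{n+1} for some λ ∈ ℂ, where e_{n+1} = (0,…,0,1). Then z_{n+1} ≠ 0 and, for every 1 ≤ j ≤ n, the quotient z_j / z_{n+1} is purely imaginary (equivalently, Re(z_j·conj(z_{n+1})) = 0). -/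
open scoped ComplexConjugate

/-!
Put `w = conj η • z + η • z̄`, a real vector. Since `η² = -⟨z,z̄⟩`, pairing with `z` gives
`⟨w,z⟩ = (⟨z,z⟩ - |η|²) conj η`, while `f(z) = |η|⁴ - ⟨z,z⟩²`; so `f(z) > 0` makes `⟨w,z⟩` a nonzero
real multiple of `conj η`. If `w = λe` with `e` real, then `λ` is real, so `⟨z,e⟩` is a nonzero real
multiple of `η`. For real `v` orthogonal to `e`, `0 = ⟨w,v⟩ = 2 Re(conj η ⟨z,v⟩)`, and in this
identity `conj η` may be replaced by its real multiple `conj ⟨z,e⟩`.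
-/

section Herm

variable {n : ℕ}

theorem herm_add_left (z₁ z₂ w : Fin (n + 1) → ℂ) :
    herm n (z₁ + z₂) w = herm n z₁ w + herm n z₂ w := by
  simp only [herm, Pi.add_apply, add_mul, Finset.sum_add_distrib]
  ring

theorem herm_smul_left (a : ℂ) (z w : Fin (n + 1) → ℂ) : herm n (a • z) w = a * herm n z w := by
  simp only [herm, Pi.smul_apply, smul_eq_mul, mul_assoc, mul_sub, Finset.mul_sum]

theorem conj_herm (z w : Fin (n + 1) → ℂ) : conj (herm n z w) = herm n w z := by
  simp only [herm, map_sub, map_sum, map_mul, Complex.conj_conj, mul_comm]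

theorem herm_conjVec_left (z w : Fin (n + 1) → ℂ) :
    herm n (conjVec n z) w = conj (herm n z (conjVec n w)) := by
  simp only [herm, conjVec, map_sub, map_sum, map_mul, Complex.conj_conj]

theorem ofReal_re_herm_self (z : Fin (n + 1) → ℂ) : ((herm n z z).re : ℂ) = herm n z z :=
  Complex.conj_eq_iff_re.mp (conj_herm z z)

theorem herm_single_castSucc_right (z : Fin (n + 1) → ℂ) (j : Fin n) :
    herm n z (Pi.single j.castSucc 1) = z j.castSucc := by
  simp [herm, Pi.single_apply, apply_ite conj, (Fin.castSucc_lt_last j).ne']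

theorem herm_single_last_right (z : Fin (n + 1) → ℂ) :
    herm n z (Pi.single (Fin.last n) 1) = -z (Fin.last n) := by
  simp [herm, (Fin.castSucc_lt_last _).ne]

theorem isRealVec_single (i : Fin (n + 1)) : IsRealVec n (Pi.single i 1) := by
  ext k
  simp [conjVec, Pi.single_apply, apply_ite conj]

theorem conj_eq_self_of_isRealVec_smul {a : ℂ} {e : Fin (n + 1) → ℂ} (he : IsRealVec n e)
    (he₀ : e ≠ 0) (hae : IsRealVec n (a • e)) : conj a = a := by
  have h : conj a • e = a • e := by
    calc conj a • e = conj a • conjVec n e := by rw [he]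
      _ = conjVec n (a • e) := by ext; simp [conjVec]
      _ = a • e := hae
  exact smul_left_injective ℂ he₀ h

end Herm

/-- The real vector `conj η • z + η • z̄ = 2 Re(conj η • z)`. When `η² = -⟨z,z̄⟩` and `f(z) > 0`, it
spans the real line over which `z` lies. The root `η` is an argument because it is determined by `z`
only up to sign. -/
noncomputable def fibreVec (n : ℕ) (η : ℂ) (z : Fin (n + 1) → ℂ) : Fin (n + 1) → ℂ :=
  conj η • z + η • conjVec n z

section FibreVec

variable {n : ℕ} {η : ℂ} {z : Fin (n + 1) → ℂ}

theorem isRealVec_fibreVec (η : ℂ) (z : Fin (n + 1) → ℂ) : IsRealVec n (fibreVec n η z) := by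
  ext k
  simp [fibreVec, conjVec, add_comm]

theorem herm_fibreVec_of_isRealVec (η : ℂ) (z : Fin (n + 1) → ℂ) {v : Fin (n + 1) → ℂ}
    (hv : IsRealVec n v) : herm n (fibreVec n η z) v = (2 * (conj η * herm n z v).re : ℝ) := by
  rw [fibreVec, herm_add_left, herm_smul_left, herm_smul_left, herm_conjVec_left, hv,
    ← Complex.add_conj, map_mul, Complex.conj_conj]

theorem herm_fibreVec_self (hη : η ^ 2 = -herm n z (conjVec n z)) :
    herm n (fibreVec n η z) z = ((herm n z z).re - Complex.normSq η : ℝ) * conj η := by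
  have hη_conj : conj (herm n z (conjVec n z)) = -conj η ^ 2 := by
    rw [← map_pow, hη, map_neg, neg_neg]
  rw [fibreVec, herm_add_left, herm_smul_left, herm_smul_left, herm_conjVec_left, hη_conj,
    Complex.ofReal_sub, ofReal_re_herm_self, Complex.normSq_eq_conj_mul_self]
  ring

theorem fdet_eq_of_sq_eq (hη : η ^ 2 = -herm n z (conjVec n z)) :
    fdet n z = Complex.normSq η ^ 2 - (herm n z z).re ^ 2 := by
  rw [fdet, ← Complex.normSq_neg, ← hη, map_pow]

theorem abs_re_herm_self_lt_normSq (hf : 0 < fdet n z) (hη : η ^ 2 = -herm n z (conjVec n z)) :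
    |(herm n z z).re| < Complex.normSq η := by
  rw [fdet_eq_of_sq_eq hη, sub_pos] at hf
  exact abs_lt_of_sq_lt_sq hf (Complex.normSq_nonneg η)

theorem herm_fibreVec_self_ne_zero (hf : 0 < fdet n z)
    (hη : η ^ 2 = -herm n z (conjVec n z)) : herm n (fibreVec n η z) z ≠ 0 := by
  have h_lt := abs_re_herm_self_lt_normSq hf hη
  have hη₀ : η ≠ 0 := Complex.normSq_pos.mp ((abs_nonneg _).trans_lt h_lt)
  rw [herm_fibreVec_self hη]
  exact mul_ne_zero (Complex.ofReal_ne_zero.mpr (sub_neg.mpr (lt_of_abs_lt h_lt)).ne)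
    ((map_ne_zero _).mpr hη₀)

theorem re_herm_mul_herm_fibreVec_eq_zero (hη : η ^ 2 = -herm n z (conjVec n z))
    {v : Fin (n + 1) → ℂ} (hv : IsRealVec n v) (hwv : herm n (fibreVec n η z) v = 0) :
    (herm n z v * herm n (fibreVec n η z) z).re = 0 := by
  have h_re : (conj η * herm n z v).re = 0 := by
    rw [herm_fibreVec_of_isRealVec η z hv, Complex.ofReal_eq_zero] at hwv
    exact (mul_eq_zero.mp hwv).resolve_left two_ne_zero
  rw [herm_fibreVec_self hη, mul_left_comm, Complex.re_ofReal_mul, mul_comm _ (conj η), h_re,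
    mul_zero]

end FibreVec

theorem fibre_over_origin_general {n : ℕ} {z : Fin (n + 1) → ℂ} (hf : 0 < fdet n z) {η : ℂ}
    (hη : η ^ 2 = -herm n z (conjVec n z)) {e : Fin (n + 1) → ℂ} (he : IsRealVec n e) {lam : ℂ}
    (hw : fibreVec n η z = lam • e) :
    herm n z e ≠ 0 ∧
    ∀ v, IsRealVec n v → herm n e v = 0 → (herm n z v * conj (herm n z e)).re = 0 := by
  have h_pair : herm n (fibreVec n η z) z = lam * conj (herm n z e) := by
    rw [hw, herm_smul_left, conj_herm]
  have h_ne : lam * conj (herm n z e) ≠ 0 := h_pair ▸ herm_fibreVec_self_ne_zero hf hη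
  obtain ⟨hlam, hze⟩ := mul_ne_zero_iff.mp h_ne
  refine ⟨(map_ne_zero _).mp hze, fun v hv hev => ?_⟩
  have he₀ : e ≠ 0 := by
    rintro rfl
    simp [herm] at hze
  obtain ⟨r, rfl⟩ := Complex.conj_eq_iff_real.mp
    (conj_eq_self_of_isRealVec_smul he he₀ (hw ▸ isRealVec_fibreVec η z))
  have hwv : herm n (fibreVec n η z) v = 0 := by rw [hw, herm_smul_left, hev, mul_zero]
  have h_scaled := re_herm_mul_herm_fibreVec_eq_zero hη hv hwv
  rw [h_pair, mul_left_comm, Complex.re_ofReal_mul] at h_scaled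
  exact (mul_eq_zero.mp h_scaled).resolve_left (Complex.ofReal_ne_zero.mp hlam)

/-- (Lemma 3.13, fibre over the origin): If `f(z) > 0`, `η² = −⟨z,z̄⟩`, and
`conj(η)·z + η·z̄` is a multiple of `e_{n+1} = (0,…,0,1)`, then `z_{n+1} ≠ 0` and each
quotient `z_j / z_{n+1}` (for `1 ≤ j ≤ n`) is purely imaginary, i.e.
`Re(z_j · conj(z_{n+1})) = 0`. -/
theorem fibre_over_origin (n : ℕ) (hn : 2 ≤ n) (z : Fin (n + 1) → ℂ)
    (hf : 0 < fdet n z) (η : ℂ) (hη : η ^ 2 = -herm n z (conjVec n z)) (lam : ℂ)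
    (hw : conj η • z + η • conjVec n z = lam • (Pi.single (Fin.last n) 1 : Fin (n + 1) → ℂ)) :
    z (Fin.last n) ≠ 0 ∧
    ∀ j : Fin n, (z j.castSucc * conj (z (Fin.last n))).re = 0 := by
  obtain ⟨h_last, h_orth⟩ := fibre_over_origin_general hf hη (isRealVec_single _) hw
  simp only [herm_single_last_right] at h_last h_orth
  refine ⟨neg_ne_zero.mp h_last, fun j => ?_⟩
  have h := h_orth _ (isRealVec_single j.castSucc) (by
    simp [herm_single_castSucc_right, (Fin.castSucc_lt_last j).ne])
  simpa only [herm_single_castSucc_right, map_neg, mul_neg, Complex.neg_re, neg_eq_zero] using h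
end

section
/- Let n ≥ 2 and m = 2, and let S₂ = {w ∈ ℂ^{n+1} \ {0} : w real, w₃ = ⋯ = w_n = 0, and ⟨w,w⟩ = 0}. Then the set Ω̃ = {z ∈ ℂ^{n+1} \ {0} : ⟨z,w⟩ ≠ 0 for every w ∈ S₂} is open in ℂ^{n+1} and has exactly three connected components (in the subspace topology). -/
open scoped ComplexConjugate

/-- The cone over the real `(m−1)`-sphere `∂H_ℝᵐ ⊂ ℙ_ℂⁿ`. -/
def SmCone (m n : ℕ) : Set (Fin (n + 1) → ℂ) :=
  {w | w ≠ 0 ∧ IsRealVec n w ∧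
    (∀ j : Fin (n + 1), m ≤ (j : ℕ) → (j : ℕ) < n → w j = 0) ∧ herm n w w = 0}

/-!
Up to real scaling, the vectors of `SmCone 2 n` are `w_u = (Re u, Im u, 0, …, 0, 1)` with `|u| = 1`,
and `2 u ⟨z, w_u⟩` is a quadratic polynomial in `u` whose coefficients are independent linear forms
in `z`. Hence the cone is the preimage, under a surjective linear map, of the set of quadratic
polynomials without root on the unit circle. Such a polynomial is a product of two linear forms
with root inside or outside the circle (possibly at `∞`), and the number of inner roots, `0`, `1` or
`2`, separates the components: each class is connected because it is the image of a product of two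
connected sets of linear forms, and it is relatively closed because products of linear forms from
closed cones make up a closed set.
-/

open Set Filter Topology
open scoped Function

section Topology

theorem isConnected_preimage_subtypeVal {X : Type*} [TopologicalSpace X] {S V : Set X} (hVS : V ⊆ S)
    (hV : IsConnected V) : IsConnected ((↑) ⁻¹' V : Set S) := by
  have himage : (↑) '' ((↑) ⁻¹' V : Set S) = V := by
    rw [Subtype.image_preimage_coe, inter_eq_right.2 hVS]
  refine ⟨(himage ▸ hV.nonempty).of_image, ?_⟩
  rw [← IsInducing.subtypeVal.isPreconnected_image, himage]
  exact hV.isPreconnected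

theorem natCard_connectedComponents_eq_of_isClosed {X ι : Type*} [TopologicalSpace X] [Finite ι]
    {S : Set X} {V T : ι → Set X} (hconn : ∀ i, IsConnected (V i))
    (hdisj : Pairwise (Disjoint on V)) (hunion : ⋃ i, V i = S)
    (hT : ∀ i, IsClosed (T i)) (hVT : ∀ i, S ∩ T i = V i) :
    Nat.card (ConnectedComponents S) = Nat.card ι := by
  let U : ι → Set S := fun i => (↑) ⁻¹' V i
  have hU_disj : Pairwise (Disjoint on U) := fun i j hij => (hdisj hij).preimage _
  have hU_union : ⋃ i, U i = univ := by
    rw [← preimage_iUnion, hunion, Subtype.coe_preimage_self]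
  have hU_closed (i : ι) : IsClosed (U i) := by
    have : U i = (↑) ⁻¹' T i := by simp only [U, ← hVT, Subtype.preimage_coe_self_inter]
    exact this ▸ (hT i).preimage continuous_subtype_val
  have hU_clopen (i : ι) : IsClopen (U i) := by
    refine ⟨hU_closed i, ?_⟩
    have hcompl : (U i)ᶜ = ⋃ j : {j // j ≠ i}, U j := by
      ext x
      obtain ⟨k, hk⟩ := mem_iUnion.1 (hU_union ▸ mem_univ x)
      simp only [mem_compl_iff, mem_iUnion, Subtype.exists, exists_prop]
      exact ⟨fun hx => ⟨k, fun h => hx (h ▸ hk), hk⟩,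
        fun ⟨j, hji, hj⟩ hi => disjoint_left.1 (hU_disj hji) hj hi⟩
    rw [← isClosed_compl_iff, hcompl]
    exact isClosed_iUnion_of_finite fun j => hU_closed j
  have hU_conn (i : ι) : IsConnected (U i) :=
    isConnected_preimage_subtypeVal (hunion ▸ subset_iUnion V i) (hconn i)
  exact Nat.card_congr
    (ConnectedComponents.equivOfIsClopenOfIsConnected hU_clopen hU_disj hU_union hU_conn)

theorem natCard_connectedComponents_preimage {E F : Type*} [NormedAddCommGroup E]
    [NormedSpace ℝ E] [CompleteSpace E] [NormedAddCommGroup F] [NormedSpace ℝ F] [CompleteSpace F]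
    (f : E →L[ℝ] F) (hf : Function.Surjective f) (S : Set F) :
    Nat.card (ConnectedComponents (f ⁻¹' S)) = Nat.card (ConnectedComponents S) := by
  have hquot : IsOpenQuotientMap (S.restrictPreimage f) :=
    IsOpenQuotientMap.restrictPreimage ⟨hf, f.continuous, f.isOpenMap hf⟩ S
  refine Nat.card_congr
    (hquot.isQuotientMap.isCoinducing.connectedComponentsHomeomorph fun y => ?_).toEquiv
  have hfiber : IsConnected (f ⁻¹' {(y : F)}) :=
    ⟨hf y, ((convex_singleton (y : F)).linear_preimage f.toLinearMap).isPreconnected⟩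
  have hfiber_val : S.restrictPreimage f ⁻¹' {y} = (↑) ⁻¹' (f ⁻¹' {(y : F)}) := by
    ext x
    simp [Subtype.ext_iff]
  rw [hfiber_val]
  exact isConnected_preimage_subtypeVal (preimage_mono (by simp)) hfiber

end Topology

section Cones

variable {E F G : Type*} [NormedAddCommGroup E] [NormedSpace ℝ E]
  [NormedAddCommGroup F] [NormedSpace ℝ F] [NormedAddCommGroup G] [NormedSpace ℝ G]

theorem exists_pos_mul_norm_pow_le_norm [ProperSpace E] {C : Set E} (hC : IsClosed C)
    (hsmul : ∀ t : ℝ, 0 ≤ t → ∀ x ∈ C, t • x ∈ C) {φ : E → G} (hφ : Continuous φ) {d : ℕ}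
    (hd : d ≠ 0) (hhom : ∀ t : ℝ, ∀ x, φ (t • x) = t ^ d • φ x)
    (hzero : ∀ x ∈ C, φ x = 0 → x = 0) :
    ∃ c > 0, ∀ x ∈ C, c * ‖x‖ ^ d ≤ ‖φ x‖ := by
  have hunit {x : E} (hx : x ∈ C) (hx0 : x ≠ 0) : ‖x‖⁻¹ • x ∈ C ∩ Metric.sphere 0 1 :=
    ⟨hsmul _ (by positivity) x hx, by simp [norm_smul, hx0]⟩
  have hbound {c : ℝ} (hc : ∀ x ∈ C ∩ Metric.sphere 0 1, c ≤ ‖φ x‖) (x : E) (hx : x ∈ C) :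
      c * ‖x‖ ^ d ≤ ‖φ x‖ := by
    rcases eq_or_ne x 0 with rfl | hx0
    · simp [hd]
    · have := hc _ (hunit hx hx0)
      rwa [hhom, norm_smul, norm_pow, norm_inv, norm_norm, inv_pow, inv_mul_eq_div,
        le_div_iff₀ (by positivity)] at this
  rcases (C ∩ Metric.sphere 0 1).eq_empty_or_nonempty with hempty | hne
  · exact ⟨1, one_pos, hbound (by simp [hempty])⟩
  · obtain ⟨x₀, hx₀, hmin⟩ :=
      ((isCompact_sphere 0 1).inter_left hC).exists_isMinOn hne hφ.norm.continuousOn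
    refine ⟨‖φ x₀‖, norm_pos_iff.2 fun h => ?_, hbound hmin⟩
    exact Metric.ne_of_mem_sphere hx₀.2 one_ne_zero (hzero x₀ hx₀.1 h)

theorem isClosed_image_of_cone [ProperSpace E] {C : Set E} (hC : IsClosed C)
    (hsmul : ∀ t : ℝ, 0 ≤ t → ∀ x ∈ C, t • x ∈ C) {φ : E → G} (hφ : Continuous φ) {d : ℕ}
    (hd : d ≠ 0) (hhom : ∀ t : ℝ, ∀ x, φ (t • x) = t ^ d • φ x)
    (hzero : ∀ x ∈ C, φ x = 0 → x = 0) : IsClosed (φ '' C) := by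
  obtain ⟨c, hc, hbound⟩ := exists_pos_mul_norm_pow_le_norm hC hsmul hφ hd hhom hzero
  refine IsSeqClosed.isClosed fun y y₀ hy hlim => ?_
  choose x hxC hxy using hy
  obtain ⟨R, hR⟩ := (Metric.isBounded_range_of_tendsto y hlim).exists_norm_le
  have hx_le (k : ℕ) : ‖x k‖ ^ d ≤ R / c := by
    rw [le_div_iff₀' hc]
    exact (hbound _ (hxC k)).trans (hxy k ▸ hR _ (mem_range_self k))
  have hx_bdd : Bornology.IsBounded {x : E | ‖x‖ ^ d ≤ R / c} :=
    isBounded_iff_forall_norm_le.2 ⟨max 1 (R / c), fun x hx => le_max_iff.2 <|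
      (le_total ‖x‖ 1).imp_right fun h => (le_self_pow₀ h hd).trans hx⟩
  obtain ⟨x₀, -, ψ, hψ, hx₀⟩ := tendsto_subseq_of_bounded hx_bdd hx_le
  refine ⟨x₀, hC.mem_of_tendsto hx₀ (.of_forall fun k => hxC _), ?_⟩
  refine tendsto_nhds_unique ((hφ.tendsto x₀).comp hx₀) ?_
  simpa only [Function.comp_def, hxy] using hlim.comp hψ.tendsto_atTop

theorem exists_pos_norm_smul_eq_norm_inv_smul {x : E} {y : F} (hx : x ≠ 0) (hy : y ≠ 0) :
    ∃ t : ℝ, 0 < t ∧ ‖t • x‖ = ‖t⁻¹ • y‖ := by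
  refine ⟨√(‖y‖ / ‖x‖), by positivity, ?_⟩
  set t := √(‖y‖ / ‖x‖)
  have ht : 0 < t := by positivity
  have htt : t * t * ‖x‖ = ‖y‖ := by
    rw [Real.mul_self_sqrt (by positivity), div_mul_cancel₀ _ (norm_ne_zero_iff.2 hx)]
  rw [norm_smul, norm_smul, norm_inv, Real.norm_of_nonneg ht.le, ← htt]
  field_simp

/-- Rescaling `(x, y)` to `(t x, t⁻¹ y)` preserves the image, so one may restrict to pairs with
`‖x‖ = ‖y‖`, among which `μ` vanishes only at the origin. -/
theorem isClosed_image2_of_cones [ProperSpace E] [ProperSpace F] {A : Set E} {B : Set F}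
    (hA : IsClosed A) (hB : IsClosed B) (hA_smul : ∀ t : ℝ, 0 ≤ t → ∀ x ∈ A, t • x ∈ A)
    (hB_smul : ∀ t : ℝ, 0 ≤ t → ∀ y ∈ B, t • y ∈ B) {μ : E → F → G}
    (hμ : Continuous (Function.uncurry μ))
    (hhom : ∀ (s t : ℝ) x y, μ (s • x) (t • y) = (s * t) • μ x y)
    (hzero : ∀ x y, μ x y = 0 → x = 0 ∨ y = 0) : IsClosed (image2 μ A B) := by
  let C : Set (E × F) := A ×ˢ B ∩ {p | ‖p.1‖ = ‖p.2‖}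
  have himage : image2 μ A B = Function.uncurry μ '' C := by
    refine Subset.antisymm ?_ (by rintro _ ⟨p, hp, rfl⟩; exact mem_image2_of_mem hp.1.1 hp.1.2)
    rintro _ ⟨x, hx, y, hy, rfl⟩
    by_cases hxy : x = 0 ∨ y = 0
    · refine ⟨((0 : ℝ) • x, (0 : ℝ) • y),
        ⟨⟨hA_smul 0 le_rfl x hx, hB_smul 0 le_rfl y hy⟩, by simp⟩, ?_⟩
      rcases hxy with rfl | rfl
      · simpa using (hhom 0 0 0 y).trans (by simpa using (hhom 0 1 0 y).symm)
      · simpa using (hhom 0 0 x 0).trans (by simpa using (hhom 1 0 x 0).symm)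
    · obtain ⟨hx0, hy0⟩ := not_or.1 hxy
      obtain ⟨t, ht, hnorm⟩ := exists_pos_norm_smul_eq_norm_inv_smul hx0 hy0
      exact ⟨(t • x, t⁻¹ • y),
        ⟨⟨hA_smul t ht.le x hx, hB_smul t⁻¹ (inv_nonneg.2 ht.le) y hy⟩, hnorm⟩,
        by simpa [ht.ne'] using hhom t t⁻¹ x y⟩
  rw [himage]
  refine isClosed_image_of_cone ?_ ?_ hμ two_ne_zero ?_ ?_
  · exact (hA.prod hB).inter (isClosed_eq (by fun_prop) (by fun_prop))
  · rintro t ht p ⟨⟨hpA, hpB⟩, hp⟩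
    exact ⟨⟨hA_smul t ht _ hpA, hB_smul t ht _ hpB⟩, by simp_all [norm_smul]⟩
  · exact fun t p => (hhom t t p.1 p.2).trans (by rw [sq, Function.uncurry])
  · rintro ⟨x, y⟩ ⟨-, hp⟩ h
    have hp : ‖x‖ = ‖y‖ := hp
    rcases hzero x y h with rfl | rfl
    · simpa [eq_comm (a := (0 : ℝ))] using hp
    · simpa using hp

end Cones

section Quadratics

/-- The value at `u` of the quadratic polynomial `a u² + b u + c` encoded as `(a, b, c)`; the
leading coefficient is allowed to vanish. -/
def quadEval {R : Type*} [CommRing R] (f : R × R × R) (u : R) : R :=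
  f.1 * u ^ 2 + f.2.1 * u + f.2.2

/-- The product of the linear polynomials `a u + b` and `c u + d` encoded as `(a, b)` and `(c, d)`,
as a quadratic polynomial in the encoding of `quadEval`. -/
def linMul {R : Type*} [CommRing R] (ℓ m : R × R) : R × R × R :=
  (ℓ.1 * m.1, ℓ.1 * m.2 + ℓ.2 * m.1, ℓ.2 * m.2)

section CommRing

variable {R : Type*} [CommRing R]

theorem quadEval_linMul (ℓ m : R × R) (u : R) :
    quadEval (linMul ℓ m) u = (ℓ.1 * u + ℓ.2) * (m.1 * u + m.2) := by
  simp only [quadEval, linMul]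
  ring

theorem linMul_comm (ℓ m : R × R) : linMul ℓ m = linMul m ℓ := by
  simp only [linMul, Prod.mk.injEq]
  exact ⟨mul_comm _ _, by ring, mul_comm _ _⟩

variable [NoZeroDivisors R]

theorem eq_zero_or_eq_zero_of_linMul_eq_zero {ℓ m : R × R} (h : linMul ℓ m = 0) :
    ℓ = 0 ∨ m = 0 := by
  obtain ⟨a, b⟩ := ℓ
  obtain ⟨c, d⟩ := m
  simp only [linMul, Prod.mk_eq_zero, mul_eq_zero] at h ⊢
  obtain ⟨hac, hmid, hbd⟩ := h
  rcases hac with rfl | rfl <;> rcases hbd with rfl | rfl <;> simp_all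

/-- The root of `ℓ` on the projective line is a root of the right-hand product, hence of one of its
factors. -/
theorem proportional_of_linMul_eq {ℓ m ℓ' m' : R × R} (h : linMul ℓ m = linMul ℓ' m') :
    ℓ.1 * ℓ'.2 = ℓ.2 * ℓ'.1 ∨ ℓ.1 * m'.2 = ℓ.2 * m'.1 := by
  simp only [linMul, Prod.mk.injEq] at h
  obtain ⟨h₁, h₂, h₃⟩ := h
  rw [← sub_eq_zero, ← sub_eq_zero (b := ℓ.2 * m'.1), ← mul_eq_zero]
  linear_combination -ℓ.2 ^ 2 * h₁ + ℓ.1 * ℓ.2 * h₂ - ℓ.1 ^ 2 * h₃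

end CommRing

open Polynomial in
theorem exists_linMul_eq {K : Type*} [Field K] [IsAlgClosed K] (f : K × K × K) :
    ∃ ℓ m : K × K, linMul ℓ m = f := by
  obtain ⟨a, b, c⟩ := f
  rcases eq_or_ne a 0 with rfl | ha
  · exact ⟨(0, 1), (b, c), by simp [linMul]⟩
  · obtain ⟨r, hr⟩ : ∃ r, (C a * X ^ 2 + C b * X + C c).IsRoot r :=
      IsAlgClosed.exists_root _ (by rw [degree_quadratic ha]; decide)
    simp only [IsRoot, eval_add, eval_mul, eval_C, eval_pow, eval_X] at hr
    refine ⟨(1, -r), (a, b + a * r), ?_⟩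
    simp only [linMul, Prod.mk.injEq]
    exact ⟨by ring, by ring, by linear_combination -hr⟩

theorem isClosed_image2_linMul {A B : Set (ℂ × ℂ)} (hA : IsClosed A) (hB : IsClosed B)
    (hA_smul : ∀ t : ℝ, 0 ≤ t → ∀ ℓ ∈ A, t • ℓ ∈ A)
    (hB_smul : ∀ t : ℝ, 0 ≤ t → ∀ m ∈ B, t • m ∈ B) : IsClosed (image2 linMul A B) := by
  refine isClosed_image2_of_cones hA hB hA_smul hB_smul ?_ (fun s t ℓ m => ?_)
    fun _ _ => eq_zero_or_eq_zero_of_linMul_eq_zero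
  · unfold Function.uncurry linMul
    fun_prop
  · ext <;> simp [linMul] <;> ring

/-- The products of a linear polynomial in `A i` and one in `A j`; by commutativity this depends
only on the unordered pair `s(i, j)`. -/
def factorClass {R ι : Type*} [CommRing R] (A : ι → Set (R × R)) : Sym2 ι → Set (R × R × R) :=
  Sym2.lift ⟨fun i j => image2 linMul (A i) (A j), fun _ _ => image2_comm linMul_comm⟩

end Quadratics

section RootSide

/-- The linear forms `a u + b` whose root lies inside (`true`) or outside (`false`) the unit
circle, the root being `∞` when `a = 0 ≠ b`. -/
def rootSide : Bool → Set (ℂ × ℂ)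
  | true => {ℓ | ‖ℓ.2‖ < ‖ℓ.1‖}
  | false => {ℓ | ‖ℓ.1‖ < ‖ℓ.2‖}

theorem isOpen_rootSide : ∀ b, IsOpen (rootSide b)
  | true => isOpen_lt (by fun_prop) (by fun_prop)
  | false => isOpen_lt (by fun_prop) (by fun_prop)

theorem smul_mem_compl_rootSide {b : Bool} {ℓ : ℂ × ℂ} (hℓ : ℓ ∈ (rootSide b)ᶜ) (t : ℝ) :
    t • ℓ ∈ (rootSide b)ᶜ := by
  cases b <;>
  · simp only [rootSide, mem_compl_iff, mem_ofPred_eq, not_lt, Prod.smul_fst, Prod.smul_snd,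
      norm_smul] at hℓ ⊢
    gcongr

theorem isConnected_rootSide_false : IsConnected (rootSide false) := by
  have himage : rootSide false =
      (fun p : ℂ × ℂ => (p.2 * p.1, p.2)) '' (Metric.ball 0 1 ×ˢ {0}ᶜ) := by
    ext ⟨a, b⟩
    simp only [rootSide, mem_ofPred_eq, mem_image, mem_prod, mem_ball_zero_iff, mem_compl_iff,
      mem_singleton_iff, Prod.exists, Prod.mk.injEq]
    constructor
    · intro hab
      have hb : b ≠ 0 := norm_pos_iff.1 ((norm_nonneg a).trans_lt hab)
      refine ⟨a / b, b, ⟨?_, hb⟩, mul_div_cancel₀ a hb, rfl⟩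
      rwa [norm_div, div_lt_one (norm_pos_iff.2 hb)]
    · rintro ⟨q, c, ⟨hq, hc⟩, rfl, rfl⟩
      rw [norm_mul]
      exact mul_lt_of_lt_one_right (norm_pos_iff.2 hc) hq
  rw [himage]
  refine IsConnected.image (.prod ?_ ?_) _ (by fun_prop)
  · exact (convex_ball 0 1).isConnected ⟨0, by simp⟩
  · exact isConnected_compl_singleton_of_one_lt_rank (by simp) 0

theorem isConnected_rootSide : ∀ b, IsConnected (rootSide b)
  | false => isConnected_rootSide_false
  | true => by
    have hswap : rootSide true = Prod.swap '' rootSide false := by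
      rw [image_swap_eq_preimage_swap]
      rfl
    exact hswap ▸ isConnected_rootSide_false.image _ continuous_swap.continuousOn

theorem eq_of_mem_rootSide_of_proportional {b c : Bool} {ℓ m : ℂ × ℂ} (hℓ : ℓ ∈ rootSide b)
    (hm : m ∈ rootSide c) (h : ℓ.1 * m.2 = ℓ.2 * m.1) : b = c := by
  have hnorm : ‖ℓ.1‖ * ‖m.2‖ = ‖ℓ.2‖ * ‖m.1‖ := by rw [← norm_mul, h, norm_mul]
  cases b <;> cases c
  · rfl
  · exact absurd hnorm (mul_lt_mul'' hℓ hm (norm_nonneg _) (norm_nonneg _)).ne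
  · exact absurd hnorm (mul_lt_mul'' hℓ hm (norm_nonneg _) (norm_nonneg _)).ne'
  · rfl

theorem exists_mem_rootSide_iff {ℓ : ℂ × ℂ} : (∃ b, ℓ ∈ rootSide b) ↔ ‖ℓ.1‖ ≠ ‖ℓ.2‖ := by
  rw [Bool.exists_bool, ne_iff_lt_or_gt]
  rfl

theorem mem_rootSide_iff_notMem_not {b : Bool} {ℓ : ℂ × ℂ} (h : ‖ℓ.1‖ ≠ ‖ℓ.2‖) :
    ℓ ∈ rootSide b ↔ ℓ ∉ rootSide !b := by
  cases b <;> simp only [rootSide, Bool.not_true, Bool.not_false, mem_ofPred_eq, not_lt]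
  · exact ⟨le_of_lt, fun hle => hle.lt_of_ne h⟩
  · exact ⟨le_of_lt, fun hle => hle.lt_of_ne h.symm⟩

end RootSide

section CircleFree

/-- The quadratic polynomials without root on the unit circle. -/
def circleFree : Set (ℂ × ℂ × ℂ) := {f | ∀ u : ℂ, ‖u‖ = 1 → quadEval f u ≠ 0}

theorem norm_fst_eq_norm_snd_iff {𝕜 : Type*} [NormedField 𝕜] {ℓ : 𝕜 × 𝕜} :
    ‖ℓ.1‖ = ‖ℓ.2‖ ↔ ∃ u, ‖u‖ = 1 ∧ ℓ.1 * u + ℓ.2 = 0 := by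
  constructor
  · intro h
    rcases eq_or_ne ℓ.1 0 with h₁ | h₁
    · have h₂ : ℓ.2 = 0 := by simpa [h₁, eq_comm] using h
      exact ⟨1, norm_one, by simp [h₁, h₂]⟩
    · refine ⟨-ℓ.2 / ℓ.1, ?_, by field_simp; ring⟩
      rw [norm_div, norm_neg, ← h, div_self (norm_ne_zero_iff.2 h₁)]
  · rintro ⟨u, hu, h⟩
    rw [eq_neg_of_add_eq_zero_right h, norm_neg, norm_mul, hu, mul_one]

theorem linMul_mem_circleFree_iff {ℓ m : ℂ × ℂ} :
    linMul ℓ m ∈ circleFree ↔ ‖ℓ.1‖ ≠ ‖ℓ.2‖ ∧ ‖m.1‖ ≠ ‖m.2‖ := by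
  simp only [circleFree, mem_ofPred_eq, quadEval_linMul, ne_eq, norm_fst_eq_norm_snd_iff,
    mul_eq_zero]
  grind

theorem isOpen_circleFree : IsOpen circleFree := by
  have hcompl : circleFreeᶜ = image2 linMul univ {m | ‖m.1‖ = ‖m.2‖} := by
    ext f
    constructor
    · intro hf
      obtain ⟨ℓ, m, rfl⟩ := exists_linMul_eq f
      rw [mem_compl_iff, linMul_mem_circleFree_iff, not_and_or, not_ne_iff, not_ne_iff] at hf
      rcases hf with hℓ | hm
      · exact ⟨m, mem_univ m, ℓ, hℓ, linMul_comm m ℓ⟩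
      · exact ⟨ℓ, mem_univ ℓ, m, hm, rfl⟩
    · rintro ⟨ℓ, -, m, hm, rfl⟩ h
      exact (linMul_mem_circleFree_iff.1 h).2 hm
  rw [← isClosed_compl_iff, hcompl]
  refine isClosed_image2_linMul isClosed_univ (isClosed_eq (by fun_prop) (by fun_prop))
    (fun _ _ _ _ => mem_univ _) fun t _ m hm => ?_
  simp only [mem_ofPred_eq] at hm
  simp [hm]

theorem isConnected_factorClass_rootSide (p : Sym2 Bool) :
    IsConnected (factorClass rootSide p) := by
  induction p with | _ b c
  have hcont : Continuous fun q : (ℂ × ℂ) × ℂ × ℂ => linMul q.1 q.2 := by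
    unfold linMul
    fun_prop
  simpa only [factorClass, Sym2.lift_mk, image_prod] using
    ((isConnected_rootSide b).prod (isConnected_rootSide c)).image _ hcont.continuousOn

theorem pairwise_disjoint_factorClass_rootSide :
    Pairwise (Disjoint on factorClass rootSide) := by
  intro p q hpq
  induction p with | _ b c
  induction q with | _ b' c'
  refine disjoint_left.2 ?_
  rintro _ ⟨ℓ, hℓ, m, hm, rfl⟩ ⟨ℓ', hℓ', m', hm', h⟩
  have hb := (proportional_of_linMul_eq h.symm).imp
    (eq_of_mem_rootSide_of_proportional hℓ hℓ') (eq_of_mem_rootSide_of_proportional hℓ hm')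
  have hc := (proportional_of_linMul_eq ((linMul_comm m ℓ).trans h.symm)).imp
    (eq_of_mem_rootSide_of_proportional hm hℓ') (eq_of_mem_rootSide_of_proportional hm hm')
  have hb' := (proportional_of_linMul_eq h).imp
    (eq_of_mem_rootSide_of_proportional hℓ' hℓ) (eq_of_mem_rootSide_of_proportional hℓ' hm)
  have hc' := (proportional_of_linMul_eq ((linMul_comm m' ℓ').trans h)).imp
    (eq_of_mem_rootSide_of_proportional hm' hℓ) (eq_of_mem_rootSide_of_proportional hm' hm)
  apply hpq
  rw [Sym2.eq_iff]
  grind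

theorem iUnion_factorClass_rootSide : ⋃ p, factorClass rootSide p = circleFree := by
  ext f
  obtain ⟨ℓ, m, rfl⟩ := exists_linMul_eq f
  rw [mem_iUnion]
  constructor
  · rintro ⟨p, hp⟩
    induction p with | _ b c
    obtain ⟨ℓ', hℓ', m', hm', h⟩ := hp
    rw [← h]
    exact linMul_mem_circleFree_iff.2
      ⟨exists_mem_rootSide_iff.1 ⟨b, hℓ'⟩, exists_mem_rootSide_iff.1 ⟨c, hm'⟩⟩
  · intro h
    obtain ⟨hℓ, hm⟩ := linMul_mem_circleFree_iff.1 h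
    obtain ⟨b, hb⟩ := exists_mem_rootSide_iff.2 hℓ
    obtain ⟨c, hc⟩ := exists_mem_rootSide_iff.2 hm
    exact ⟨s(b, c), mem_image2_of_mem hb hc⟩

theorem isClosed_factorClass_compl_rootSide (p : Sym2 Bool) :
    IsClosed (factorClass (fun b => (rootSide !b)ᶜ) p) := by
  induction p with | _ b c
  exact isClosed_image2_linMul (isOpen_rootSide _).isClosed_compl
    (isOpen_rootSide _).isClosed_compl (fun t _ _ hℓ => smul_mem_compl_rootSide hℓ t)
    fun t _ _ hm => smul_mem_compl_rootSide hm t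

theorem circleFree_inter_factorClass_compl_rootSide (p : Sym2 Bool) :
    circleFree ∩ factorClass (fun b => (rootSide !b)ᶜ) p = factorClass rootSide p := by
  induction p with | _ b c
  ext f
  constructor
  · rintro ⟨hf, ℓ, hℓ, m, hm, rfl⟩
    obtain ⟨hℓ_norm, hm_norm⟩ := linMul_mem_circleFree_iff.1 hf
    exact mem_image2_of_mem ((mem_rootSide_iff_notMem_not hℓ_norm).2 hℓ)
      ((mem_rootSide_iff_notMem_not hm_norm).2 hm)
  · rintro ⟨ℓ, hℓ, m, hm, rfl⟩
    have hℓ_norm := exists_mem_rootSide_iff.1 ⟨b, hℓ⟩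
    have hm_norm := exists_mem_rootSide_iff.1 ⟨c, hm⟩
    exact ⟨linMul_mem_circleFree_iff.2 ⟨hℓ_norm, hm_norm⟩,
      mem_image2_of_mem ((mem_rootSide_iff_notMem_not hℓ_norm).1 hℓ)
        ((mem_rootSide_iff_notMem_not hm_norm).1 hm)⟩

theorem natCard_connectedComponents_circleFree : Nat.card (ConnectedComponents circleFree) = 3 := by
  rw [natCard_connectedComponents_eq_of_isClosed isConnected_factorClass_rootSide
    pairwise_disjoint_factorClass_rootSide iUnion_factorClass_rootSide
    isClosed_factorClass_compl_rootSide circleFree_inter_factorClass_compl_rootSide,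
    Nat.card_eq_fintype_card]
  rfl

end CircleFree

section Herm

theorem herm_smul_right (n : ℕ) (z w : Fin (n + 1) → ℂ) (t : ℝ) :
    herm n z (t • w) = t * herm n z w := by
  simp only [herm, Pi.smul_apply, Complex.real_smul, map_mul, Complex.conj_ofReal, mul_sub,
    Finset.mul_sum]
  congr 1
  · exact Finset.sum_congr rfl fun _ _ => by ring
  · ring

/-- The vector `(x, y, 0, …, 0, t)` of `ℂ^{k+3}`; for `n = k + 2` these make up the subspace
containing `SmCone 2 n`. -/
def planeVec (k : ℕ) (x y t : ℂ) : Fin (k + 2 + 1) → ℂ :=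
  Fin.snoc (Fin.cons x (Fin.cons y 0) : Fin (k + 2) → ℂ) t

variable {k : ℕ}

@[simp]
theorem planeVec_zero (x y t : ℂ) : planeVec k x y t 0 = x := rfl

@[simp]
theorem planeVec_one (x y t : ℂ) : planeVec k x y t 1 = y := rfl

@[simp]
theorem planeVec_last (x y t : ℂ) : planeVec k x y t (Fin.last _) = t := Fin.snoc_last _ _

theorem planeVec_eq_zero (x y t : ℂ) {j : Fin (k + 2 + 1)} (hj : 2 ≤ (j : ℕ))
    (hj' : (j : ℕ) < k + 2) : planeVec k x y t j = 0 := by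
  obtain ⟨i, rfl⟩ : ∃ i : Fin k, j = i.succ.succ.castSucc :=
    ⟨⟨j - 2, by omega⟩, by ext; simp only [Fin.val_castSucc, Fin.val_succ]; omega⟩
  rw [planeVec, Fin.snoc_castSucc]
  rfl

theorem eq_planeVec_of_forall_eq_zero {w : Fin (k + 2 + 1) → ℂ}
    (h : ∀ j : Fin (k + 2 + 1), 2 ≤ (j : ℕ) → (j : ℕ) < k + 2 → w j = 0) :
    w = planeVec k (w 0) (w 1) (w (Fin.last _)) := by
  ext j
  rcases Nat.lt_or_ge j 2 with hj | hj
  · obtain rfl | rfl : j = 0 ∨ j = 1 := by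
      rw [Fin.ext_iff, Fin.ext_iff, Fin.val_zero, Fin.val_one]
      omega
    · rfl
    · rfl
  · rcases j.le_last.eq_or_lt with rfl | hlast
    · rw [planeVec_last]
    · rw [h j hj hlast, planeVec_eq_zero _ _ _ hj hlast]

theorem herm_planeVec (z : Fin (k + 2 + 1) → ℂ) (x y t : ℂ) :
    herm (k + 2) z (planeVec k x y t) =
      z 0 * conj x + z 1 * conj y - z (Fin.last _) * conj t := by
  simp only [herm, planeVec, Fin.snoc_castSucc, Fin.snoc_last, Fin.sum_univ_succ, Fin.cons_zero,
    Fin.cons_succ, Pi.zero_apply, map_zero, mul_zero, Finset.sum_const_zero, add_zero]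
  rfl

theorem smul_planeVec (s : ℝ) (x y t : ℂ) :
    s • planeVec k x y t = planeVec k (s * x) (s * y) (s * t) := by
  refine (eq_planeVec_of_forall_eq_zero fun j hj hj' => ?_).trans (by simp)
  simp [planeVec_eq_zero _ _ _ hj hj']

theorem conjVec_planeVec (x y t : ℂ) :
    conjVec (k + 2) (planeVec k x y t) = planeVec k (conj x) (conj y) (conj t) := by
  refine (eq_planeVec_of_forall_eq_zero fun j hj hj' => ?_).trans (by simp [conjVec])
  simp [conjVec, planeVec_eq_zero _ _ _ hj hj']

theorem planeVec_mem_SmCone_iff {x y t : ℝ} :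
    planeVec k x y t ∈ SmCone 2 (k + 2) ↔ t ≠ 0 ∧ x ^ 2 + y ^ 2 = t ^ 2 := by
  have hnull : herm (k + 2) (planeVec k x y t) (planeVec k x y t) = 0 ↔ x ^ 2 + y ^ 2 = t ^ 2 := by
    simp only [herm_planeVec, planeVec_zero, planeVec_one, planeVec_last, Complex.conj_ofReal,
      sub_eq_zero, sq]
    norm_cast
  have hreal : IsRealVec (k + 2) (planeVec k x y t) := by
    simp only [IsRealVec, conjVec_planeVec, Complex.conj_ofReal]
  constructor
  · rintro ⟨h0, -, -, h⟩
    refine ⟨?_, hnull.1 h⟩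
    rintro rfl
    obtain ⟨rfl, rfl⟩ : x = 0 ∧ y = 0 := by
      have := hnull.1 h
      constructor <;> nlinarith
    exact h0 ((eq_planeVec_of_forall_eq_zero (w := 0) fun _ _ _ => rfl).trans (by simp)).symm
  · rintro ⟨ht, h⟩
    refine ⟨fun h0 => ht ?_, hreal, fun j => planeVec_eq_zero _ _ _, hnull.2 h⟩
    simpa using congrFun h0 (Fin.last _)

theorem mem_SmCone_two_iff {w : Fin (k + 2 + 1) → ℂ} :
    w ∈ SmCone 2 (k + 2) ↔
      ∃ t : ℝ, t ≠ 0 ∧ ∃ u : ℂ, ‖u‖ = 1 ∧ w = t • planeVec k u.re u.im 1 := by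
  constructor
  · intro hw
    obtain ⟨x, y, t, rfl⟩ : ∃ x y t : ℝ, w = planeVec k x y t := by
      have hw_real (j : Fin (k + 2 + 1)) := Complex.conj_eq_iff_re.1 (congrFun hw.2.1 j)
      refine ⟨(w 0).re, (w 1).re, (w (Fin.last _)).re, ?_⟩
      simpa only [hw_real] using eq_planeVec_of_forall_eq_zero hw.2.2.1
    obtain ⟨ht, hxy⟩ := planeVec_mem_SmCone_iff.1 hw
    refine ⟨t, ht, ⟨x / t, y / t⟩, ?_, ?_⟩
    · rw [← pow_eq_one_iff_of_nonneg (norm_nonneg _) two_ne_zero, Complex.sq_norm,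
        Complex.normSq_mk]
      field_simp
      exact hxy
    · have ht' : (t : ℂ) ≠ 0 := Complex.ofReal_ne_zero.2 ht
      simp [smul_planeVec, mul_div_cancel₀ _ ht']
  · rintro ⟨t, ht, u, hu, rfl⟩
    have hu_sq : u.re * u.re + u.im * u.im = 1 := by
      rw [← Complex.normSq_apply, Complex.normSq_eq_norm_sq, hu, one_pow]
    rw [smul_planeVec, mul_one, ← Complex.ofReal_mul, ← Complex.ofReal_mul]
    exact planeVec_mem_SmCone_iff.2 ⟨ht, by linear_combination t ^ 2 * hu_sq⟩

/-- The map sending `z` to the coefficients of the polynomial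
`2 u ⟨z, (Re u, Im u, 0, …, 0, 1)⟩` in `u` on the unit circle, where `Re u = (u + u⁻¹) / 2` and
`Im u = (u - u⁻¹) / (2 i)`. -/
noncomputable def circlePoly (k : ℕ) : (Fin (k + 2 + 1) → ℂ) →L[ℂ] ℂ × ℂ × ℂ :=
  let coord (j : Fin (k + 2 + 1)) : (Fin (k + 2 + 1) → ℂ) →L[ℂ] ℂ := .proj j
  (coord 0 - Complex.I • coord 1).prod
    (((-2 : ℂ) • coord (Fin.last _)).prod (coord 0 + Complex.I • coord 1))

theorem circlePoly_apply (z : Fin (k + 2 + 1) → ℂ) :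
    circlePoly k z =
      (z 0 - Complex.I * z 1, -2 * z (Fin.last _), z 0 + Complex.I * z 1) :=
  rfl

theorem surjective_circlePoly : Function.Surjective (circlePoly k) := by
  rintro ⟨a, b, c⟩
  refine ⟨planeVec k ((a + c) / 2) (Complex.I * (a - c) / 2) (-b / 2), ?_⟩
  simp only [circlePoly_apply, planeVec_zero, planeVec_one, planeVec_last, Prod.mk.injEq]
  refine ⟨?_, by ring, ?_⟩
  · linear_combination (-(a - c) / 2) * Complex.I_mul_I
  · linear_combination ((a - c) / 2) * Complex.I_mul_I

theorem quadEval_circlePoly (z : Fin (k + 2 + 1) → ℂ) {u : ℂ} (hu : ‖u‖ = 1) :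
    quadEval (circlePoly k z) u = 2 * u * herm (k + 2) z (planeVec k u.re u.im 1) := by
  have huu : u * conj u = 1 := by rw [Complex.mul_conj', hu]; norm_num
  have hre : 2 * u * u.re = u ^ 2 + 1 := by
    rw [Complex.re_eq_add_conj]
    linear_combination huu
  have him : 2 * u * u.im = -Complex.I * (u ^ 2 - 1) := by
    rw [Complex.im_eq_sub_conj, div_mul_eq_div_div, div_eq_mul_inv _ Complex.I, Complex.inv_I]
    linear_combination Complex.I * huu
  simp only [quadEval, circlePoly_apply, herm_planeVec, Complex.conj_ofReal, map_one]
  linear_combination -z 0 * hre - z 1 * him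

theorem setOf_herm_ne_zero_eq_preimage_circleFree :
    {z : Fin (k + 2 + 1) → ℂ | z ≠ 0 ∧ ∀ w ∈ SmCone 2 (k + 2), herm (k + 2) z w ≠ 0} =
      circlePoly k ⁻¹' circleFree := by
  have hherm (z : Fin (k + 2 + 1) → ℂ) : (∀ w ∈ SmCone 2 (k + 2), herm (k + 2) z w ≠ 0) ↔
      circlePoly k z ∈ circleFree := by
    constructor
    · intro h u hu
      have hu0 : u ≠ 0 := norm_ne_zero_iff.1 (hu ▸ one_ne_zero)
      rw [quadEval_circlePoly z hu]
      exact mul_ne_zero (by simp [hu0])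
        (h _ (mem_SmCone_two_iff.2 ⟨1, one_ne_zero, u, hu, (one_smul _ _).symm⟩))
    · intro h w hw
      obtain ⟨t, ht, u, hu, rfl⟩ := mem_SmCone_two_iff.1 hw
      rw [herm_smul_right]
      exact mul_ne_zero (Complex.ofReal_ne_zero.2 ht)
        (right_ne_zero_of_mul (quadEval_circlePoly z hu ▸ h u hu))
  have hzero : (0 : ℂ × ℂ × ℂ) ∉ circleFree := fun h => h 1 norm_one (by simp [quadEval])
  ext z
  rw [mem_ofPred_eq, hherm, mem_preimage, and_iff_right_iff_imp]
  rintro hz rfl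
  exact hzero (map_zero (circlePoly k) ▸ hz)

end Herm

/-- (Theorem 3 / `teo:tres` i, cone version): for `m = 2` the cone over the Kulkarni
discontinuity region is open and has exactly three connected components. -/
theorem omegaCone_three_components (n : ℕ) (hn : 2 ≤ n) :
    IsOpen {z : Fin (n + 1) → ℂ | z ≠ 0 ∧ ∀ w ∈ SmCone 2 n, herm n z w ≠ 0} ∧
    Nat.card (ConnectedComponents
      ↥{z : Fin (n + 1) → ℂ | z ≠ 0 ∧ ∀ w ∈ SmCone 2 n, herm n z w ≠ 0}) = 3 := by
  obtain ⟨k, rfl⟩ := Nat.exists_eq_add_of_le' hn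
  rw [setOf_herm_ne_zero_eq_preimage_circleFree]
  exact ⟨isOpen_circleFree.preimage (circlePoly k).continuous,
    (natCard_connectedComponents_preimage ((circlePoly k).restrictScalars ℝ)
      surjective_circlePoly circleFree).trans natCard_connectedComponents_circleFree⟩
end
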